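/- arXiv:1411.4796 — 2 statements merged into one kernel-verified Lean document; each statement's English description precedes it below -/
import Mathlib

section
/- For every instance (g, h) of the infinite Post Correspondence Problem with morphisms g, h : A* → B* over finite alphabets A and B, there exists an integer weighted automaton 𝒜 over the alphabet A having exactly 5 states such that for every infinite word w ∈ A^ω: w is a solution of the instance (g, h) if and only if w is not accepted by 𝒜 (i.e., w ∉ L(𝒜)). -/
/-- Extension of a letter-to-word map (a monoid morphism `A* → B*` given by its values on
letters) to finite words. -/
def wordImage {a b : ℕ} (g : Fin a → List (Fin b)) (p : List (Fin a)) : List (Fin b) :=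
  p.flatMap g

/-- `u` is a proper prefix of `v`: `v = u ++ w` with both `u` and `w` nonempty. -/
def IsProperPrefix {β : Type*} (u v : List β) : Prop :=
  u ≠ [] ∧ u <+: v ∧ u ≠ v

/-- The finite prefix of length `n` of an infinite word. -/
def wordPrefix {a : ℕ} (w : ℕ → Fin a) (n : ℕ) : List (Fin a) :=
  (List.range n).map w

/-- An infinite word `w` is a solution of the ωPCP instance `(g, h)` if for every finite
nonempty prefix `p` of `w`, either `h(p)` is a proper prefix of `g(p)` or `g(p)` is a proper
prefix of `h(p)`. -/
def IsOmegaPCPSolution {a b : ℕ} (g h : Fin a → List (Fin b)) (w : ℕ → Fin a) : Prop :=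
  ∀ n : ℕ,
    IsProperPrefix (wordImage h (wordPrefix w (n + 1))) (wordImage g (wordPrefix w (n + 1))) ∨
    IsProperPrefix (wordImage g (wordPrefix w (n + 1))) (wordImage h (wordPrefix w (n + 1)))

/-- `π` is a path of the integer weighted automaton with transition set `σ` and initial state
`q0` for the infinite word `w`: all transitions belong to `σ`, the first transition starts in
`q0`, consecutive transitions match, and the `j`-th transition reads the letter `w j`. -/
def IsPathFor {Q A : Type*} (σ : Finset (Q × A × Q × ℤ)) (q0 : Q) (w : ℕ → A)
    (π : ℕ → Q × A × Q × ℤ) : Prop :=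
  (∀ j, π j ∈ σ) ∧ (π 0).1 = q0 ∧ (∀ j, (π j).2.2.1 = (π (j + 1)).1) ∧ (∀ j, (π j).2.1 = w j)

/-- The infinite word `w` is accepted by the integer weighted automaton `(σ, q0, F)`:
some path for `w` has a finite prefix of weight `0` reaching a final state. -/
def WAAccepts {Q A : Type*} (σ : Finset (Q × A × Q × ℤ)) (q0 : Q) (F : Finset Q)
    (w : ℕ → A) : Prop :=
  ∃ π, IsPathFor σ q0 w π ∧
    ∃ n, (∑ j ∈ Finset.range (n + 1), (π j).2.2.2) = 0 ∧ (π n).2.2.1 ∈ F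

/-!
A word is not a solution exactly when the images of some nonempty prefix have equal length, or an
image of its first letter is empty, or the two images carry different letters at a common position.
At first the automaton stores `b + 1` times the difference of the lengths of the images. To verify
a mismatch, it stops counting the image whose letter at the mismatch is read first at the position
`i` of that letter, and guesses the letter `d` of the other image. Up to sign, the weight is now
`(b + 1) * i + d` minus `b + 1` times the length of the other image, and subtracting the next
position and letter read there gives `0` if and only if both the positions and the letters agree,
since all letters are less than `b + 1`.
-/

section WeightedAutomata

variable {Q A : Type*} {σ : Finset (Q × A × Q × ℤ)} {q₀ : Q} {w : ℕ → A}

/-- The weights of the paths of length `n` for `w` from `q₀` to a given state, built up letter by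
letter so that acceptance can be decided without reference to infinite paths. -/
def runWeights (σ : Finset (Q × A × Q × ℤ)) (q₀ : Q) (w : ℕ → A) : ℕ → Q → Set ℤ
  | 0, q => {S | q = q₀ ∧ S = 0}
  | n + 1, p => {S | ∃ q, ∃ R ∈ runWeights σ q₀ w n q, ∃ z, (q, w n, p, z) ∈ σ ∧ R + z = S}

theorem IsPathFor.sum_mem_runWeights {π : ℕ → Q × A × Q × ℤ} (hπ : IsPathFor σ q₀ w π) (n : ℕ) :
    ∑ j ∈ Finset.range n, (π j).2.2.2 ∈ runWeights σ q₀ w n (π n).1 := by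
  obtain ⟨hσ, hinit, hlink, hletter⟩ := hπ
  induction n with
  | zero => exact ⟨hinit, rfl⟩
  | succ n ih =>
    refine ⟨_, _, ih, (π n).2.2.2, ?_, (Finset.sum_range_succ _ n).symm⟩
    rw [← hlink n, ← hletter n]
    exact hσ n

theorem exists_isPathFor (hσ : ∀ q x, ∃ p z, (q, x, p, z) ∈ σ) (q₀ : Q) (w : ℕ → A) :
    ∃ π, IsPathFor σ q₀ w π := by
  choose next weight hnext using hσ
  let state : ℕ → Q := fun n => Nat.rec q₀ (fun k q => next q (w k)) n
  exact ⟨fun n => (state n, w n, next (state n) (w n), weight (state n) (w n)),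
    fun _ => hnext _ _, rfl, fun _ => rfl, fun _ => rfl⟩

theorem IsPathFor.cons {q p : Q} {z : ℤ} {π : ℕ → Q × A × Q × ℤ} (ht : (q, w 0, p, z) ∈ σ)
    (hπ : IsPathFor σ p (fun j => w (j + 1)) π) :
    IsPathFor σ q w (fun j => Nat.casesOn j (q, w 0, p, z) π) := by
  obtain ⟨hσ, hinit, hlink, hletter⟩ := hπ
  refine ⟨?_, rfl, ?_, ?_⟩ <;> rintro (_ | j)
  exacts [ht, hσ j, hinit.symm, hlink j, rfl, hletter j]

theorem IsPathFor.exists_append {n : ℕ} {q : Q} {S : ℤ} {ρ : ℕ → Q × A × Q × ℤ}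
    (hρ : IsPathFor σ q (fun j => w (n + j)) ρ) (hS : S ∈ runWeights σ q₀ w n q) :
    ∃ π, IsPathFor σ q₀ w π ∧ ∑ j ∈ Finset.range n, (π j).2.2.2 = S ∧
      ∀ j, π (n + j) = ρ j := by
  induction n generalizing q S ρ with
  | zero =>
    obtain ⟨rfl, rfl⟩ := hS
    simp only [Nat.zero_add] at hρ ⊢
    exact ⟨ρ, hρ, rfl, fun _ => rfl⟩
  | succ n ih =>
    obtain ⟨p, R, hR, z, ht, rfl⟩ := hS
    have hcons := IsPathFor.cons (w := fun j => w (n + j)) ht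
      (by simpa only [Nat.add_right_comm, Nat.add_assoc] using hρ)
    obtain ⟨π, hπ, rfl, htail⟩ := ih hcons hR
    refine ⟨π, hπ, ?_, fun j => ?_⟩
    · rw [Finset.sum_range_succ, show π n = (p, w n, q, z) from htail 0]
    · rw [Nat.add_right_comm]
      exact htail (j + 1)

theorem waAccepts_iff_runWeights {F : Finset Q} (hσ : ∀ q x, ∃ p z, (q, x, p, z) ∈ σ) :
    WAAccepts σ q₀ F w ↔ ∃ n, ∃ q ∈ F, 0 ∈ runWeights σ q₀ w (n + 1) q := by
  constructor
  · rintro ⟨π, hπ, n, hsum, hF⟩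
    refine ⟨n, _, hF, ?_⟩
    rw [← hsum, hπ.2.2.1 n]
    exact hπ.sum_mem_runWeights (n + 1)
  · rintro ⟨n, q, hq, hzero⟩
    obtain ⟨ρ, hρ⟩ := exists_isPathFor hσ q (fun j => w (n + 1 + j))
    obtain ⟨π, hπ, hsum, htail⟩ := hρ.exists_append hzero
    refine ⟨π, hπ, n, hsum, ?_⟩
    rw [hπ.2.2.1 n, show π (n + 1) = ρ 0 from htail 0, hρ.2.1]
    exact hq

/-- The image of a transition under a renaming of the states, used to replace an arbitrary state
set by `Fin k`. -/
def renameTransition {Q' : Type*} (r : Q → Q') (t : Q × A × Q × ℤ) : Q' × A × Q' × ℤ :=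
  (r t.1, t.2.1, r t.2.2.1, t.2.2.2)

theorem WAAccepts.rename {Q' : Type*} [DecidableEq Q'] [DecidableEq A] {F : Finset Q}
    (hw : WAAccepts σ q₀ F w) (r : Q → Q') :
    WAAccepts (σ.image (renameTransition r)) (r q₀) (F.image r) w := by
  obtain ⟨π, ⟨hσ, hinit, hlink, hletter⟩, n, hsum, hF⟩ := hw
  exact ⟨renameTransition r ∘ π, ⟨fun j => Finset.mem_image_of_mem _ (hσ j), congrArg r hinit,
    fun j => congrArg r (hlink j), hletter⟩, n, hsum, Finset.mem_image_of_mem r hF⟩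

theorem waAccepts_rename_iff {Q' : Type*} [DecidableEq Q'] [DecidableEq A]
    {F : Finset Q} (e : Q ≃ Q') :
    WAAccepts (σ.image (renameTransition e)) (e q₀) (F.image e) w ↔ WAAccepts σ q₀ F w := by
  classical
  refine ⟨fun hw => ?_, fun hw => hw.rename e⟩
  have hinv : renameTransition (A := A) e.symm ∘ renameTransition e = id :=
    funext fun t => by simp [renameTransition]
  simpa [Finset.image_image, hinv] using hw.rename e.symm

theorem exists_waAccepts_iff_of_card_eq [Fintype Q] {k : ℕ}
    (hk : Fintype.card Q = k) (hσ : ∀ q x, ∃ p z, (q, x, p, z) ∈ σ) (q₀ : Q) (F : Finset Q) :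
    ∃ (τ : Finset (Fin k × A × Fin k × ℤ)) (p₀ : Fin k) (G : Finset (Fin k)),
      (∀ q x, ∃ p z, (q, x, p, z) ∈ τ) ∧
      ∀ w : ℕ → A, WAAccepts τ p₀ G w ↔ WAAccepts σ q₀ F w := by
  classical
  let e : Q ≃ Fin k := Fintype.equivFinOfCardEq hk
  refine ⟨σ.image (renameTransition e), e q₀, F.image e, fun q x => ?_,
    fun w => waAccepts_rename_iff e⟩
  obtain ⟨p, z, ht⟩ := hσ (e.symm q) x
  exact ⟨e p, z, Finset.mem_image.2 ⟨_, ht, by simp [renameTransition]⟩⟩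

end WeightedAutomata

section Mismatch

variable {β : Type*} {u v x y : List β}

/-- The words `u` and `v` carry different letters at some common position, which is what keeps
both from being a prefix of the other. -/
def Mismatch (u v : List β) : Prop :=
  ∃ (i : ℕ) (c d : β), u[i]? = some c ∧ v[i]? = some d ∧ c ≠ d

theorem Mismatch.symm (huv : Mismatch u v) : Mismatch v u := by
  obtain ⟨i, c, d, hc, hd, hcd⟩ := huv
  exact ⟨i, d, c, hd, hc, hcd.symm⟩

theorem not_mismatch_nil : ¬ Mismatch [] v := by
  simp [Mismatch]

theorem Mismatch.not_prefix (huv : Mismatch u v) : ¬ u <+: v := by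
  rintro ⟨t, rfl⟩
  obtain ⟨i, c, d, hc, hd, hcd⟩ := huv
  have hi := (List.getElem?_eq_some_iff.1 hc).1
  rw [List.getElem?_append_left hi, hc] at hd
  exact hcd (Option.some.inj hd)

theorem prefix_of_not_mismatch (huv : ¬ Mismatch u v) (hle : u.length ≤ v.length) : u <+: v := by
  refine List.prefix_iff_getElem?.2 fun i hi => ?_
  by_contra hne
  have hv : v[i]? = some v[i] := List.getElem?_eq_getElem (hi.trans_le hle)
  refine huv ⟨i, u[i], v[i], List.getElem?_eq_getElem hi, hv, fun heq => hne ?_⟩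
  rw [hv, heq]

theorem not_isProperPrefix_or_iff :
    ¬ (IsProperPrefix v u ∨ IsProperPrefix u v) ↔
      u.length = v.length ∨ u = [] ∨ v = [] ∨ Mismatch u v := by
  constructor
  · intro hproper
    by_contra! hgood
    obtain ⟨hlen, hu, hv, huv⟩ := hgood
    have hne : u ≠ v := fun heq => hlen (congrArg List.length heq)
    rcases le_total u.length v.length with hle | hle
    · exact hproper (.inr ⟨hu, prefix_of_not_mismatch huv hle, hne⟩)
    · exact hproper (.inl ⟨hv, prefix_of_not_mismatch (fun h => huv h.symm) hle, hne.symm⟩)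
  · rintro (hlen | rfl | rfl | huv) (⟨hnil, hpre, hne⟩ | ⟨hnil, hpre, hne⟩)
    · exact hne (hpre.eq_of_length hlen.symm)
    · exact hne (hpre.eq_of_length hlen)
    · exact hnil (List.prefix_nil.1 hpre)
    · exact hnil rfl
    · exact hnil rfl
    · exact hnil (List.prefix_nil.1 hpre)
    · exact huv.symm.not_prefix hpre
    · exact huv.not_prefix hpre

theorem getElem?_append_eq_some_iff {i : ℕ} {c : β} :
    (u ++ x)[i]? = some c ↔ u[i]? = some c ∨ ∃ j, x[j]? = some c ∧ i = u.length + j := by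
  rcases lt_or_ge i u.length with hi | hi
  · rw [List.getElem?_append_left hi, or_iff_left]
    rintro ⟨j, -, rfl⟩
    omega
  · rw [List.getElem?_append_right hi, List.getElem?_eq_none hi]
    constructor
    · exact fun hc => .inr ⟨_, hc, by omega⟩
    · rintro (hc | ⟨j, hc, rfl⟩)
      · cases hc
      · simpa using hc

/-- The words `u ++ x` and `v ++ y` carry different letters at some common position that lies
beyond both `u` and `v`, inside `u` only, or inside `v` only. These are the mismatches that arise
when `u` and `v` are extended by `x` and `y`. -/
def NewMismatch (u x v y : List β) : Prop :=
  (∃ (i j : ℕ) (c d : β), x[i]? = some c ∧ y[j]? = some d ∧ c ≠ d ∧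
    u.length + i = v.length + j) ∨
  Mismatch (u.drop v.length) y ∨ Mismatch (v.drop u.length) x

theorem mismatch_append_iff :
    Mismatch (u ++ x) (v ++ y) ↔ Mismatch u v ∨ NewMismatch u x v y := by
  simp only [Mismatch, NewMismatch, List.getElem?_drop, getElem?_append_eq_some_iff]
  constructor
  · rintro ⟨i, c, d, hc | ⟨j, hc, rfl⟩, hd | ⟨k, hd, hi⟩, hcd⟩
    · exact .inl ⟨i, c, d, hc, hd, hcd⟩
    · exact .inr (.inr (.inl ⟨k, c, d, hi ▸ hc, hd, hcd⟩))
    · exact .inr (.inr (.inr ⟨j, d, c, hd, hc, hcd.symm⟩))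
    · exact .inr (.inl ⟨j, k, c, d, hc, hd, hcd, hi⟩)
  · rintro (⟨i, c, d, hc, hd, hcd⟩ | ⟨i, j, c, d, hc, hd, hcd, hij⟩ | ⟨k, c, d, hc, hd, hcd⟩ |
      ⟨j, d, c, hd, hc, hdc⟩)
    · exact ⟨i, c, d, .inl hc, .inl hd, hcd⟩
    · exact ⟨_, c, d, .inr ⟨i, hc, rfl⟩, .inr ⟨j, hd, hij⟩, hcd⟩
    · exact ⟨_, c, d, .inl hc, .inr ⟨k, hd, rfl⟩, hcd⟩
    · exact ⟨_, c, d, .inr ⟨j, hc, rfl⟩, .inl hd, hdc.symm⟩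

end Mismatch

section Solutions

variable {a b : ℕ} {g h : Fin a → List (Fin b)} {w : ℕ → Fin a}

/-- The image under `g` of the prefix of length `n` of the infinite word `w`. -/
abbrev prefixImage (g : Fin a → List (Fin b)) (w : ℕ → Fin a) (n : ℕ) : List (Fin b) :=
  wordImage g (wordPrefix w n)

theorem prefixImage_zero : prefixImage g w 0 = [] := rfl

theorem prefixImage_succ (n : ℕ) : prefixImage g w (n + 1) = prefixImage g w n ++ g (w n) := by
  simp [prefixImage, wordImage, wordPrefix, List.range_succ]

theorem length_prefixImage_succ (n : ℕ) :
    (prefixImage g w (n + 1)).length = (prefixImage g w n).length + (g (w n)).length := by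
  rw [prefixImage_succ, List.length_append]

theorem apply_zero_eq_nil_of_prefixImage_eq_nil {n : ℕ} (hn : prefixImage g w (n + 1) = []) :
    g (w 0) = [] := by
  rw [prefixImage, wordImage, List.flatMap_eq_nil_iff] at hn
  exact hn _ (List.mem_map_of_mem (List.mem_range.2 n.succ_pos))

theorem exists_mismatch_prefixImage_iff :
    (∃ n, Mismatch (prefixImage g w n) (prefixImage h w n)) ↔
      ∃ n, NewMismatch (prefixImage g w n) (g (w n)) (prefixImage h w n) (h (w n)) := by
  constructor
  · rintro ⟨n, hn⟩
    induction n with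
    | zero => exact (not_mismatch_nil hn).elim
    | succ n ih =>
      rw [prefixImage_succ, prefixImage_succ, mismatch_append_iff] at hn
      exact hn.elim ih fun hnew => ⟨n, hnew⟩
  · rintro ⟨n, hn⟩
    refine ⟨n + 1, ?_⟩
    rw [prefixImage_succ, prefixImage_succ, mismatch_append_iff]
    exact .inr hn

theorem not_isOmegaPCPSolution_iff_mismatch :
    ¬ IsOmegaPCPSolution g h w ↔
      (∃ n, (prefixImage g w (n + 1)).length = (prefixImage h w (n + 1)).length) ∨
      (g (w 0) = [] ∨ h (w 0) = []) ∨
      ∃ n, Mismatch (prefixImage g w n) (prefixImage h w n) := by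
  simp only [IsOmegaPCPSolution, not_forall, not_isProperPrefix_or_iff]
  constructor
  · rintro ⟨n, hlen | hg | hh | hmis⟩
    · exact .inl ⟨n, hlen⟩
    · exact .inr (.inl (.inl (apply_zero_eq_nil_of_prefixImage_eq_nil hg)))
    · exact .inr (.inl (.inr (apply_zero_eq_nil_of_prefixImage_eq_nil hh)))
    · exact .inr (.inr ⟨n + 1, hmis⟩)
  · rintro (⟨n, hlen⟩ | (hg | hh) | ⟨_ | n, hmis⟩)
    · exact ⟨n, .inl hlen⟩
    · exact ⟨0, .inr (.inl ((prefixImage_succ 0).trans hg))⟩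
    · exact ⟨0, .inr (.inr (.inl ((prefixImage_succ 0).trans hh)))⟩
    · exact (not_mismatch_nil hmis).elim
    · exact ⟨n, .inr (.inr (.inr hmis))⟩

theorem not_isOmegaPCPSolution_iff_exists_step :
    ¬ IsOmegaPCPSolution g h w ↔
      ∃ n, (prefixImage g w (n + 1)).length = (prefixImage h w (n + 1)).length ∨
        ((g (w n) = [] ∨ h (w n) = []) ∧
          (prefixImage g w n).length = (prefixImage h w n).length) ∨
        NewMismatch (prefixImage g w n) (g (w n)) (prefixImage h w n) (h (w n)) := by
  rw [not_isOmegaPCPSolution_iff_mismatch, exists_mismatch_prefixImage_iff]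
  constructor
  · rintro (⟨n, hlen⟩ | hnil | ⟨n, hnew⟩)
    · exact ⟨n, .inl hlen⟩
    · exact ⟨0, .inr (.inl ⟨hnil, rfl⟩)⟩
    · exact ⟨n, .inr (.inr hnew)⟩
  · rintro ⟨n, hlen | ⟨hnil, hlen⟩ | hnew⟩
    · exact .inl ⟨n, hlen⟩
    · cases n with
      | zero => exact .inr (.inl hnil)
      | succ n => exact .inl ⟨n, hlen⟩
    · exact .inr (.inr ⟨n, hnew⟩)

end Solutions

/-- The states of the automaton that accepts the words which are not solutions of an instance
`f true, f false`. In state `pending t` a position of the image under `f t` has been guessed,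
together with a letter different from the one there, which is to be found at the same position of
the image under `f (!t)`. -/
inductive PCPState
  | start
  | pending (t : Bool)
  | accept
  | sink
  deriving DecidableEq, Fintype

namespace PCPState

variable {a b : ℕ} {f : Bool → Fin a → List (Fin b)} {w : ℕ → Fin a}

/-- The sign with which positions in the image under `f t` contribute to the weights, so that the
two kinds of pending states can be treated at once. -/
def sideSign (t : Bool) : ℤ := bif t then 1 else -1

theorem sideSign_mul_sub (t : Bool) (z : Bool → ℤ) :
    sideSign t * (z t - z (!t)) = z true - z false := by
  cases t <;> simp [sideSign]

theorem sideSign_mul_eq_zero_iff {t : Bool} {z : ℤ} : sideSign t * z = 0 ↔ z = 0 := by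
  cases t <;> simp [sideSign]

theorem mul_add_letter_inj {m k : ℤ} {c d : Fin b} :
    (b + 1) * m + (c : ℤ) = (b + 1) * k + (d : ℤ) ↔ m = k ∧ c = d := by
  constructor
  · intro heq
    have hdiv (l : ℤ) (e : Fin b) : ((b + 1) * l + (e : ℤ)) / (b + 1) = l := by
      rw [Int.add_comm, Int.add_mul_ediv_left _ _ (by omega),
        Int.ediv_eq_zero_of_lt (by omega) (by omega), zero_add]
    have hmk : m = k := by rw [← hdiv m c, heq, hdiv]
    exact ⟨hmk, by subst hmk; omega⟩
  · rintro ⟨rfl, rfl⟩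
    rfl

/-- The pairs `(c, i)` such that the letter `c` stands at position `i` of `u`, as a
finite set over which the transitions range. -/
def occurrences {β : Type*} [DecidableEq β] (u : List β) : Finset (β × ℕ) := u.zipIdx.toFinset

theorem mem_occurrences {β : Type*} [DecidableEq β] {u : List β} {c : β} {i : ℕ} :
    (c, i) ∈ occurrences u ↔ u[i]? = some c := by
  rw [occurrences, List.mem_toFinset, List.mem_zipIdx_iff_getElem?]

/-- The weights of the transitions from one state to another that read the letter `x`. A position
`i` and a letter `d` are encoded together as `(b + 1) * i + d`. The weight `0` from `start` to
`accept` detects an empty image of the first letter of the word. -/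
def transitionWeights (f : Bool → Fin a → List (Fin b)) (x : Fin a) :
    PCPState → PCPState → Finset ℤ
  | start, start => {((b + 1) * ((f true x).length - (f false x).length) : ℤ)}
  | start, pending t =>
      ((occurrences (f t x) ×ˢ Finset.univ).filter fun o => o.1.1 ≠ o.2).image
        fun ((_, i), d) => sideSign t * ((b + 1) * (i - (f (!t) x).length) + d)
  | start, accept =>
      {((b + 1) * ((f true x).length - (f false x).length) : ℤ)} ∪
      (if f true x = [] ∨ f false x = [] then {0} else ∅) ∪
      ((occurrences (f true x) ×ˢ occurrences (f false x)).filter fun o => o.1.1 ≠ o.2.1).image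
        fun ((_, i), (_, j)) => (b + 1) * (i - j)
  | pending s, pending t =>
      if s = t then {-sideSign t * ((b + 1) * (f (!t) x).length)} else ∅
  | pending t, accept =>
      (occurrences (f (!t) x)).image fun (c, i) => -sideSign t * ((b + 1) * i + c)
  | accept, sink => {0}
  | sink, sink => {0}
  | _, _ => ∅

theorem mem_transitionWeights_start_pending {x : Fin a} {t : Bool} {z : ℤ} :
    z ∈ transitionWeights f x start (pending t) ↔
      ∃ (i : ℕ) (c d : Fin b), (f t x)[i]? = some c ∧ c ≠ d ∧
        z = sideSign t * ((b + 1) * (i - (f (!t) x).length) + d) := by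
  simp only [transitionWeights, Finset.mem_image, Finset.mem_filter, Finset.mem_product,
    Finset.mem_univ, and_true, Prod.exists, mem_occurrences]
  constructor
  · rintro ⟨c, i, d, ⟨hc, hcd⟩, rfl⟩
    exact ⟨i, c, d, hc, hcd, rfl⟩
  · rintro ⟨i, c, d, hc, hcd, rfl⟩
    exact ⟨c, i, d, ⟨hc, hcd⟩, rfl⟩

theorem mem_transitionWeights_pending_pending {x : Fin a} {s t : Bool} {z : ℤ} :
    z ∈ transitionWeights f x (pending s) (pending t) ↔
      s = t ∧ z = -sideSign t * ((b + 1) * (f (!t) x).length) := by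
  rw [transitionWeights]
  split_ifs with hst <;> simp [hst]

theorem mem_transitionWeights_pending_accept {x : Fin a} {t : Bool} {z : ℤ} :
    z ∈ transitionWeights f x (pending t) accept ↔
      ∃ (i : ℕ) (c : Fin b), (f (!t) x)[i]? = some c ∧ z = -sideSign t * ((b + 1) * i + c) := by
  simp only [transitionWeights, Finset.mem_image, Prod.exists, mem_occurrences]
  rw [exists_comm]
  simp only [eq_comm]

theorem mem_transitionWeights_start_accept {x : Fin a} {z : ℤ} :
    z ∈ transitionWeights f x start accept ↔
      z = (b + 1) * ((f true x).length - (f false x).length) ∨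
      ((f true x = [] ∨ f false x = []) ∧ z = 0) ∨
      ∃ (i j : ℕ) (c d : Fin b), (f true x)[i]? = some c ∧ (f false x)[j]? = some d ∧ c ≠ d ∧
        z = (b + 1) * (i - j) := by
  simp only [transitionWeights, Finset.mem_image, Finset.mem_union, Finset.mem_singleton,
    Finset.mem_filter, Finset.mem_product, Prod.exists, mem_occurrences, or_assoc]
  refine or_congr Iff.rfl (or_congr ?_ ?_)
  · split_ifs with hnil <;> simp [hnil]
  · constructor
    · rintro ⟨c, i, d, j, ⟨⟨hc, hd⟩, hcd⟩, rfl⟩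
      exact ⟨i, j, c, d, hc, hd, hcd, rfl⟩
    · rintro ⟨i, j, c, d, hc, hd, hcd, rfl⟩
      exact ⟨c, i, d, j, ⟨⟨hc, hd⟩, hcd⟩, rfl⟩

/-- The transition set of the automaton for the instance `f true, f false`. -/
def transitions (f : Bool → Fin a → List (Fin b)) : Finset (PCPState × Fin a × PCPState × ℤ) :=
  Finset.univ.biUnion fun t : PCPState × Fin a × PCPState =>
    (transitionWeights f t.2.1 t.1 t.2.2).image fun z => (t.1, t.2.1, t.2.2, z)

theorem mem_transitions {q p : PCPState} {x : Fin a} {z : ℤ} :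
    (q, x, p, z) ∈ transitions f ↔ z ∈ transitionWeights f x q p := by
  simp [transitions]

theorem exists_mem_transitions (q : PCPState) (x : Fin a) :
    ∃ p z, (q, x, p, z) ∈ transitions f := by
  simp only [mem_transitions]
  cases q with
  | start => exact ⟨start, _, Finset.mem_singleton_self _⟩
  | pending t => exact ⟨pending t, _, mem_transitionWeights_pending_pending.2 ⟨rfl, rfl⟩⟩
  | accept => exact ⟨sink, 0, Finset.mem_singleton_self _⟩
  | sink => exact ⟨sink, 0, Finset.mem_singleton_self _⟩

theorem mem_runWeights_succ {n : ℕ} {p : PCPState} {S : ℤ} (hp : p ≠ sink) :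
    S ∈ runWeights (transitions f) start w (n + 1) p ↔
      (∃ R ∈ runWeights (transitions f) start w n start,
        ∃ z ∈ transitionWeights f (w n) start p, R + z = S) ∨
      ∃ t, ∃ R ∈ runWeights (transitions f) start w n (pending t),
        ∃ z ∈ transitionWeights f (w n) (pending t) p, R + z = S := by
  simp only [← mem_transitions]
  constructor
  · rintro ⟨_ | t | _ | _, R, hR, z, hz, rfl⟩
    · exact .inl ⟨R, hR, z, hz, rfl⟩
    · exact .inr ⟨t, R, hR, z, hz, rfl⟩
    all_goals
      rw [mem_transitions] at hz
      cases p <;> first | exact (hp rfl).elim | exact (Finset.notMem_empty z hz).elim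
  · rintro (⟨R, hR, z, hz, rfl⟩ | ⟨t, R, hR, z, hz, rfl⟩)
    · exact ⟨start, R, hR, z, hz, rfl⟩
    · exact ⟨pending t, R, hR, z, hz, rfl⟩

theorem mem_runWeights_start {n : ℕ} {S : ℤ} :
    S ∈ runWeights (transitions f) start w n start ↔
      S = (b + 1) * ((prefixImage (f true) w n).length - (prefixImage (f false) w n).length) := by
  induction n generalizing S with
  | zero => simp [runWeights, prefixImage_zero]
  | succ n ih =>
    rw [mem_runWeights_succ (by decide)]
    simp only [ih, transitionWeights, Finset.mem_singleton, Finset.notMem_empty, exists_eq_left,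
      false_and, and_false, exists_false, or_false, length_prefixImage_succ, Nat.cast_add,
      eq_comm (a := S)]
    refine Eq.congr_left ?_
    ring

theorem mem_runWeights_pending_succ {n : ℕ} {t : Bool} {S : ℤ} :
    S ∈ runWeights (transitions f) start w (n + 1) (pending t) ↔
      (∃ R ∈ runWeights (transitions f) start w n start,
        ∃ z ∈ transitionWeights f (w n) start (pending t), R + z = S) ∨
      ∃ R ∈ runWeights (transitions f) start w n (pending t),
        R + -sideSign t * ((b + 1) * (f (!t) (w n)).length) = S := by
  rw [mem_runWeights_succ (by simp)]
  simp only [mem_transitionWeights_pending_pending]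
  refine or_congr Iff.rfl ⟨?_, ?_⟩
  · rintro ⟨s, R, hR, _, ⟨rfl, rfl⟩, rfl⟩
    exact ⟨R, hR, rfl⟩
  · rintro ⟨R, hR, rfl⟩
    exact ⟨t, R, hR, _, ⟨rfl, rfl⟩, rfl⟩

theorem mem_runWeights_pending {n : ℕ} {t : Bool} {S : ℤ} :
    S ∈ runWeights (transitions f) start w n (pending t) ↔
      ∃ (i : ℕ) (c d : Fin b), (prefixImage (f t) w n)[i]? = some c ∧ c ≠ d ∧
        S = sideSign t * ((b + 1) * (i - (prefixImage (f (!t)) w n).length) + d) := by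
  induction n generalizing S with
  | zero => simp [runWeights, prefixImage_zero]
  | succ n ih =>
    have hguess (j : ℕ) (d : Fin b) :
        (b + 1) * ((prefixImage (f true) w n).length - (prefixImage (f false) w n).length : ℤ) +
          sideSign t * ((b + 1) * (j - (f (!t) (w n)).length) + d) =
        sideSign t * ((b + 1) * (((prefixImage (f t) w n).length + j : ℕ) -
          (prefixImage (f (!t)) w (n + 1)).length) + d) := by
      rw [← sideSign_mul_sub t fun s => ((prefixImage (f s) w n).length : ℤ),
        length_prefixImage_succ]
      push_cast
      ring
    have hwait (i : ℕ) (d : Fin b) :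
        sideSign t * ((b + 1) * (i - (prefixImage (f (!t)) w n).length) + d) +
          -sideSign t * ((b + 1) * (f (!t) (w n)).length) =
        sideSign t * ((b + 1) * (i - (prefixImage (f (!t)) w (n + 1)).length) + d) := by
      rw [length_prefixImage_succ]
      push_cast
      ring
    simp only [mem_runWeights_pending_succ, mem_runWeights_start, ih,
      mem_transitionWeights_start_pending, prefixImage_succ (g := f t),
      getElem?_append_eq_some_iff]
    constructor
    · rintro (⟨_, rfl, _, ⟨j, c, d, hc, hcd, rfl⟩, rfl⟩ | ⟨_, ⟨i, c, d, hc, hcd, rfl⟩, rfl⟩)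
      · exact ⟨_, c, d, .inr ⟨j, hc, rfl⟩, hcd, hguess j d⟩
      · exact ⟨i, c, d, .inl hc, hcd, hwait i d⟩
    · rintro ⟨i, c, d, hc | ⟨j, hc, rfl⟩, hcd, rfl⟩
      · exact .inr ⟨_, ⟨i, c, d, hc, hcd, rfl⟩, hwait i d⟩
      · exact .inl ⟨_, rfl, _, ⟨j, c, d, hc, hcd, rfl⟩, hguess j d⟩

theorem exists_start_add_accept_eq_zero_iff {n : ℕ} :
    (∃ R ∈ runWeights (transitions f) start w n start,
      ∃ z ∈ transitionWeights f (w n) start accept, R + z = 0) ↔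
      (prefixImage (f true) w (n + 1)).length = (prefixImage (f false) w (n + 1)).length ∨
      ((f true (w n) = [] ∨ f false (w n) = []) ∧
        (prefixImage (f true) w n).length = (prefixImage (f false) w n).length) ∨
      ∃ (i j : ℕ) (c d : Fin b), (f true (w n))[i]? = some c ∧ (f false (w n))[j]? = some d ∧
        c ≠ d ∧ (prefixImage (f true) w n).length + i = (prefixImage (f false) w n).length + j := by
  have hscale (m : ℤ) : (b + 1) * m = 0 ↔ m = 0 := by
    rw [mul_eq_zero, or_iff_right (by positivity)]
  simp only [mem_runWeights_start, mem_transitionWeights_start_accept, exists_eq_left, or_and_right,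
    exists_or, length_prefixImage_succ]
  refine or_congr ?_ (or_congr ?_ ?_)
  · rw [← mul_add, hscale]
    omega
  · simp only [and_assoc, exists_and_left, exists_eq_left, add_zero, hscale, sub_eq_zero,
      Nat.cast_inj]
  · constructor
    · rintro ⟨z, ⟨i, j, c, d, hc, hd, hcd, rfl⟩, hzero⟩
      rw [← mul_add, hscale] at hzero
      exact ⟨i, j, c, d, hc, hd, hcd, by omega⟩
    · rintro ⟨i, j, c, d, hc, hd, hcd, hij⟩
      refine ⟨_, ⟨i, j, c, d, hc, hd, hcd, rfl⟩, ?_⟩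
      rw [← mul_add, hscale]
      omega

theorem exists_pending_add_accept_eq_zero_iff {n : ℕ} {t : Bool} :
    (∃ R ∈ runWeights (transitions f) start w n (pending t),
      ∃ z ∈ transitionWeights f (w n) (pending t) accept, R + z = 0) ↔
      Mismatch ((prefixImage (f t) w n).drop (prefixImage (f (!t)) w n).length)
        (f (!t) (w n)) := by
  have hzero (i k : ℕ) (d e : Fin b) :
      sideSign t * ((b + 1) * (i - (prefixImage (f (!t)) w n).length) + d) +
        -sideSign t * ((b + 1) * k + e) = 0 ↔
      i = (prefixImage (f (!t)) w n).length + k ∧ d = e := by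
    rw [neg_mul, ← sub_eq_add_neg, ← mul_sub, sideSign_mul_eq_zero_iff, sub_eq_zero,
      mul_add_letter_inj]
    omega
  simp only [mem_runWeights_pending, mem_transitionWeights_pending_accept, Mismatch,
    List.getElem?_drop]
  constructor
  · rintro ⟨_, ⟨i, c, d, hc, hcd, rfl⟩, _, ⟨k, e, he, rfl⟩, hsum⟩
    obtain ⟨rfl, rfl⟩ := (hzero i k d e).1 hsum
    exact ⟨k, c, d, hc, he, hcd⟩
  · rintro ⟨k, c, d, hc, hd, hcd⟩
    exact ⟨_, ⟨_, c, d, hc, hcd, rfl⟩, _, ⟨k, d, hd, rfl⟩, (hzero _ k d d).2 ⟨rfl, rfl⟩⟩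

theorem zero_mem_runWeights_accept {n : ℕ} :
    0 ∈ runWeights (transitions f) start w (n + 1) accept ↔
      (prefixImage (f true) w (n + 1)).length = (prefixImage (f false) w (n + 1)).length ∨
      ((f true (w n) = [] ∨ f false (w n) = []) ∧
        (prefixImage (f true) w n).length = (prefixImage (f false) w n).length) ∨
      NewMismatch (prefixImage (f true) w n) (f true (w n)) (prefixImage (f false) w n)
        (f false (w n)) := by
  rw [mem_runWeights_succ (by decide), exists_start_add_accept_eq_zero_iff]
  simp only [exists_pending_add_accept_eq_zero_iff, Bool.exists_bool, Bool.not_true, Bool.not_false,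
    NewMismatch, or_assoc]
  rw [or_comm (a := Mismatch _ (f true (w n)))]

theorem waAccepts_transitions_iff :
    WAAccepts (transitions f) start {accept} w ↔ ¬ IsOmegaPCPSolution (f true) (f false) w := by
  rw [waAccepts_iff_runWeights exists_mem_transitions, not_isOmegaPCPSolution_iff_exists_step]
  simp only [Finset.mem_singleton, exists_eq_left, zero_mem_runWeights_accept]

end PCPState

/-- For every instance `(g, h)` of the infinite Post Correspondence Problem there is an
integer weighted automaton with exactly 5 states (and a complete transition relation) such
that an infinite word `w` is a solution of `(g, h)` iff `w` is not accepted by the automaton. -/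
theorem omegaPCP_to_five_state_weighted_automaton (a b : ℕ)
    (g h : Fin a → List (Fin b)) :
    ∃ (σ : Finset (Fin 5 × Fin a × Fin 5 × ℤ)) (q0 : Fin 5) (F : Finset (Fin 5)),
      (∀ q : Fin 5, ∀ x : Fin a, ∃ p z, (q, x, p, z) ∈ σ) ∧
      ∀ w : ℕ → Fin a, (IsOmegaPCPSolution g h w ↔ ¬ WAAccepts σ q0 F w) := by
  obtain ⟨σ, q₀, F, hcomplete, haccepts⟩ := exists_waAccepts_iff_of_card_eq
    (by decide : Fintype.card PCPState = 5) PCPState.exists_mem_transitions PCPState.start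
    {PCPState.accept} (σ := PCPState.transitions fun t => bif t then g else h)
  refine ⟨σ, q₀, F, hcomplete, fun w => ?_⟩
  rw [haccepts, PCPState.waAccepts_transitions_iff, not_not, cond_true, cond_false]
end

section
/- The universality problem for integer weighted automata on infinite words is undecidable: the predicate on encoded integer weighted automata 𝒜 (with state set Fin n, alphabet Fin m, transitions given by a finite list, an initial state and a list of final states, all encoded as natural numbers) asserting that L(𝒜) = A^ω, i.e., that every infinite word over the alphabet is accepted by 𝒜, is not a computable predicate. -/
/-!
The halting problem is reduced to universality. A stack machine computing a partial recursive
function halts exactly when a deterministic system of registers, which hold the stacks as numbers in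
a fixed base, makes finitely many steps; each step only divides a register by the base and checks
the remainder, or multiplies it and adds a digit. An infinite run of such a system, with rules
`t₀, t₁, …`, is spelled as a word `t₀ B₀ t₁ B₁ …` in which the block `Bᵢ` contains the quotients of
the registers in unary. A word that does not spell an infinite run contains a first error, and an
automaton with a single integer counter can guess it: consecutive rules do not fit, or one register
changes wrongly between two consecutive blocks. The counter then adds what that register should
contain and subtracts what it does contain, and a nonzero difference can be counted back to `0`.
Hence the automaton accepts every word if and only if there is no infinite run; the input of the
machine enters only its weights.
-/

/-- A code for an integer weighted automaton: the number of states `n` (states are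
`0, …, n-1`), the number of letters `m` (letters are `0, …, m-1`), the list of transitions
`(source state, letter, target state, weight)`, the initial state, and the list of final
states. -/
abbrev WACode : Type := ℕ × ℕ × List (ℕ × ℕ × ℕ × ℤ) × ℕ × List ℕ

/-- The code describes a genuine complete integer weighted automaton: all data are in range
and for every state `q` and letter `x` there is at least one transition `(q, x, p, z)`. -/
def WAWellFormed : WACode → Prop
  | (n, m, ts, q0, fs) =>
    q0 < n ∧ (∀ q ∈ fs, q < n) ∧
    (∀ t ∈ ts, t.1 < n ∧ t.2.1 < m ∧ t.2.2.1 < n) ∧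
    (∀ q < n, ∀ x < m, ∃ p z, (q, x, p, z) ∈ ts)

/-- `π` is a path for the infinite word `w` over the transition list `ts` starting in `q0`. -/
def WAIsPath (ts : List (ℕ × ℕ × ℕ × ℤ)) (q0 : ℕ) (w : ℕ → ℕ)
    (π : ℕ → ℕ × ℕ × ℕ × ℤ) : Prop :=
  (∀ j, π j ∈ ts) ∧ (π 0).1 = q0 ∧ (∀ j, (π j).2.2.1 = (π (j + 1)).1) ∧ (∀ j, (π j).2.1 = w j)

/-- The encoded automaton accepts the infinite word `w`: some path for `w` has a finite
prefix with weight `0` reaching a final state. -/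
def WAAcceptsCode : WACode → (ℕ → ℕ) → Prop
  | (_, _, ts, q0, fs), w =>
    ∃ π, WAIsPath ts q0 w π ∧
      ∃ k, (∑ j ∈ Finset.range (k + 1), (π j).2.2.2) = 0 ∧ (π k).2.2.1 ∈ fs

/-- `L(𝒜) = A^ω`: every infinite word over the alphabet is accepted. -/
def WAUniversal (c : WACode) : Prop :=
  ∀ w : ℕ → ℕ, (∀ i, w i < c.2.1) → WAAcceptsCode c w

noncomputable section

section PrimitiveRecursive

theorem primrec_list_map_of_forall {α β γ : Type*} [Primcodable α] [Primcodable γ]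
    (l : List β) {f : α → β → γ} (hf : ∀ b, Primrec fun a => f a b) :
    Primrec fun a => l.map (f a) := by
  induction l with
  | nil => exact .const []
  | cons b l ih => exact Primrec.list_cons.comp (hf b) ih

theorem primrec_intCast : Primrec ((↑) : ℕ → ℤ) :=
  have hencode (n : ℕ) : 2 * n = Encodable.encode (n : ℤ) := rfl
  Primrec.encode_iff.1 <| (Primrec.nat_mul.comp (.const 2) .id).of_eq hencode

theorem primrec_of_halving {α : Type*} [Primcodable α] {f : ℕ → α} {g : ℕ → α → α}
    (hg : Primrec₂ g) (hf : ∀ n ≠ 0, f n = g n (f (n / 2))) : Primrec f := by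
  have hlength : Primrec fun p : Unit × List α => p.2.length := Primrec.list_length.comp .snd
  let step (_ : Unit) (l : List α) : Option α :=
    if l.length = 0 then some (f 0) else l[l.length / 2]?.map (g l.length)
  have hstep : Primrec₂ step :=
    .ite (Primrec.eq.comp hlength (.const 0)) (.const _) <|
      .option_map
        (Primrec.list_getElem?.comp .snd (Primrec.nat_div.comp hlength (.const 2)))
        (hg.comp (hlength.comp .fst) .snd)
  refine (Primrec.nat_strong_rec (fun _ : Unit => f) hstep fun _ n => ?_).comp (.const ()) .id
  rcases eq_or_ne n 0 with rfl | hn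
  · simp [step]
  · simp [step, hn, Nat.div_lt_self (Nat.pos_of_ne_zero hn), hf n hn]

end PrimitiveRecursive

section Index

variable {α : Type*} [Finite α]

/-- The number of an element of a finite type, by which it is named in a `WACode`. -/
def index (a : α) : ℕ := Finite.equivFin α a

theorem index_lt (a : α) : index a < Nat.card α := (Finite.equivFin α a).2

theorem index_injective : Function.Injective (index : α → ℕ) :=
  Fin.val_injective.comp (Finite.equivFin α).injective

theorem exists_index_eq {i : ℕ} (hi : i < Nat.card α) : ∃ a : α, index a = i :=
  ⟨(Finite.equivFin α).symm ⟨i, hi⟩, by simp [index]⟩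

end Index

/-- An integer weighted automaton over arbitrary types of states and letters, with at most one
transition between two given states for each letter. -/
structure WeightedAutomaton (Q A : Type*) where
  edge : Q → A → Q → Prop
  weight : Q → A → Q → ℤ
  start : Q
  final : Set Q

namespace WeightedAutomaton

variable {Q A : Type*}

/-- Completeness: every letter can be read in every state. -/
def IsComplete (𝓐 : WeightedAutomaton Q A) : Prop := ∀ q a, ∃ p, 𝓐.edge q a p

/-- `𝓐.Run w n q z`: reading the first `n` letters of `w`, the automaton can reach `q` with
weight `z`. -/
inductive Run (𝓐 : WeightedAutomaton Q A) (w : ℕ → A) : ℕ → Q → ℤ → Prop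
  | zero : Run 𝓐 w 0 𝓐.start 0
  | succ {n q z p} : Run 𝓐 w n q z → 𝓐.edge q (w n) p →
      Run 𝓐 w (n + 1) p (z + 𝓐.weight q (w n) p)

/-- Acceptance in terms of finite runs; it agrees with `WAAcceptsCode` for complete automata, where
finite runs extend to infinite paths. -/
def Accepts (𝓐 : WeightedAutomaton Q A) (w : ℕ → A) : Prop :=
  ∃ n, ∃ q ∈ 𝓐.final, 𝓐.Run w (n + 1) q 0

/-- The states along an infinite path for `w`. -/
def IsPath (𝓐 : WeightedAutomaton Q A) (w : ℕ → A) (ρ : ℕ → Q) : Prop :=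
  ρ 0 = 𝓐.start ∧ ∀ j, 𝓐.edge (ρ j) (w j) (ρ (j + 1))

variable {𝓐 : WeightedAutomaton Q A} {w : ℕ → A} {n : ℕ} {q p : Q} {z : ℤ}

theorem IsPath.run {ρ : ℕ → Q} (hρ : 𝓐.IsPath w ρ) (n : ℕ) :
    𝓐.Run w n (ρ n) (∑ j ∈ Finset.range n, 𝓐.weight (ρ j) (w j) (ρ (j + 1))) := by
  induction n with
  | zero => rw [hρ.1]; exact .zero
  | succ n ih => rw [Finset.sum_range_succ]; exact ih.succ (hρ.2 n)

theorem Run.loop (h : 𝓐.Run w n q z) {m : ℕ} (hq : ∀ j < m, 𝓐.edge q (w (n + j)) q) :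
    𝓐.Run w (n + m) q (z + ∑ j ∈ Finset.range m, 𝓐.weight q (w (n + j)) q) := by
  induction m with
  | zero => simpa using h
  | succ m ih =>
    rw [Finset.sum_range_succ, ← add_assoc z]
    exact (ih fun j hj => hq j (Nat.lt_succ_of_lt hj)).succ (hq m m.lt_succ_self)

theorem IsComplete.exists_continuation (h𝓐 : 𝓐.IsComplete) (w : ℕ → A) (q : Q) :
    ∃ τ : ℕ → Q, τ 0 = q ∧ ∀ j, 𝓐.edge (τ j) (w j) (τ (j + 1)) := by
  choose next hnext using h𝓐
  exact ⟨fun j => j.rec q fun i p => next p (w i), rfl, fun _ => hnext _ _⟩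

theorem Run.exists_isPath_extending (h : 𝓐.Run w n q z) :
    ∀ τ : ℕ → Q, τ 0 = q → (∀ j, 𝓐.edge (τ j) (w (n + j)) (τ (j + 1))) →
      ∃ ρ, 𝓐.IsPath w ρ ∧ (∀ j, ρ (n + j) = τ j) ∧
        ∑ j ∈ Finset.range n, 𝓐.weight (ρ j) (w j) (ρ (j + 1)) = z := by
  induction h with
  | zero => exact fun τ hτ hedge => ⟨τ, ⟨hτ, by simpa using hedge⟩, by simp, by simp⟩
  | @succ n q z p _ hqp ih =>
    rintro τ rfl hedge
    obtain ⟨ρ, hρ, hρτ, hsum⟩ := ih (fun j => j.casesOn q τ) rfl fun j => by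
      cases j with
      | zero => exact hqp
      | succ j => simpa [Nat.add_right_comm, Nat.add_assoc] using hedge j
    have hn : ρ n = q := hρτ 0
    have hn1 : ρ (n + 1) = τ 0 := hρτ 1
    refine ⟨ρ, hρ, fun j => ?_, ?_⟩
    · rw [Nat.add_assoc, Nat.add_comm 1 j]; exact hρτ (j + 1)
    · rw [Finset.sum_range_succ, hsum, hn, hn1]

theorem IsComplete.accepts_iff (h𝓐 : 𝓐.IsComplete) :
    𝓐.Accepts w ↔ ∃ ρ, 𝓐.IsPath w ρ ∧ ∃ n,
      ∑ j ∈ Finset.range (n + 1), 𝓐.weight (ρ j) (w j) (ρ (j + 1)) = 0 ∧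
        ρ (n + 1) ∈ 𝓐.final := by
  constructor
  · rintro ⟨n, q, hq, hrun⟩
    obtain ⟨τ, rfl, hτ⟩ := h𝓐.exists_continuation (fun j => w (n + 1 + j)) q
    obtain ⟨ρ, hρ, hρτ, hsum⟩ := hrun.exists_isPath_extending τ rfl hτ
    exact ⟨ρ, hρ, n, hsum, (hρτ 0).symm ▸ hq⟩
  · rintro ⟨ρ, hρ, n, hsum, hfinal⟩
    exact ⟨n, _, hfinal, hsum ▸ hρ.run (n + 1)⟩

section Code

variable [Finite Q] [Finite A]

/-- The encoded transition that a weighted automaton has along an edge. -/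
def transition (weight : Q → A → Q → ℤ) (e : Q × A × Q) : ℕ × ℕ × ℕ × ℤ :=
  (index e.1, index e.2.1, index e.2.2, weight e.1 e.2.1 e.2.2)

/-- The code of a weighted automaton with finitely many states and letters. -/
def toCode (𝓐 : WeightedAutomaton Q A) : WACode :=
  (Nat.card Q, Nat.card A,
    (Set.toFinite {e : Q × A × Q | 𝓐.edge e.1 e.2.1 e.2.2}).toFinset.toList.map
      (transition 𝓐.weight),
    index 𝓐.start, (Set.toFinite 𝓐.final).toFinset.toList.map index)

theorem mem_transitions {t : ℕ × ℕ × ℕ × ℤ} :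
    t ∈ 𝓐.toCode.2.2.1 ↔ ∃ q a p, 𝓐.edge q a p ∧ transition 𝓐.weight (q, a, p) = t := by
  simp [toCode]

theorem index_mem_finals : index q ∈ 𝓐.toCode.2.2.2.2 ↔ q ∈ 𝓐.final := by
  simp [toCode, index_injective.eq_iff]

theorem IsComplete.wellFormed_toCode (h𝓐 : 𝓐.IsComplete) : WAWellFormed 𝓐.toCode := by
  refine ⟨index_lt _, ?_, ?_, ?_⟩
  · intro i hi
    obtain ⟨q, -, rfl⟩ := List.mem_map.1 hi
    exact index_lt q
  · intro t ht
    obtain ⟨q, a, p, -, rfl⟩ := mem_transitions.1 ht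
    exact ⟨index_lt q, index_lt a, index_lt p⟩
  · intro i hi j hj
    obtain ⟨q, rfl⟩ := exists_index_eq hi
    obtain ⟨a, rfl⟩ := exists_index_eq hj
    obtain ⟨p, hp⟩ := h𝓐 q a
    exact ⟨index p, 𝓐.weight q a p, mem_transitions.2 ⟨q, a, p, hp, rfl⟩⟩

theorem isPath_toCode_iff {π : ℕ → ℕ × ℕ × ℕ × ℤ} :
    WAIsPath 𝓐.toCode.2.2.1 (index 𝓐.start) (fun j => index (w j)) π ↔
      ∃ ρ, 𝓐.IsPath w ρ ∧ ∀ j, π j = transition 𝓐.weight (ρ j, w j, ρ (j + 1)) := by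
  constructor
  · rintro ⟨hmem, hstart, hlink, hletter⟩
    choose ρ a p hedge hπ using fun j => mem_transitions.1 (hmem j)
    obtain rfl : a = w := funext fun j =>
      index_injective (by simpa [← hπ, transition] using hletter j)
    obtain rfl : p = fun j => ρ (j + 1) := funext fun j =>
      index_injective (by simpa [← hπ, transition] using hlink j)
    have hstart : ρ 0 = 𝓐.start := index_injective (by simpa [← hπ, transition] using hstart)
    exact ⟨ρ, ⟨hstart, hedge⟩, fun j => (hπ j).symm⟩
  · rintro ⟨ρ, ⟨hstart, hedge⟩, hπ⟩
    refine ⟨fun j => mem_transitions.2 ⟨_, _, _, hedge j, (hπ j).symm⟩, ?_⟩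
    simp only [hπ, transition, hstart, implies_true, and_self]

theorem IsComplete.acceptsCode_iff (h𝓐 : 𝓐.IsComplete) :
    WAAcceptsCode 𝓐.toCode (fun j => index (w j)) ↔ 𝓐.Accepts w := by
  rw [h𝓐.accepts_iff]
  constructor
  · rintro ⟨π, hπ, n, hsum, hfinal⟩
    obtain ⟨ρ, hρ, hπρ⟩ := isPath_toCode_iff.1 hπ
    simp only [hπρ, transition] at hsum hfinal
    exact ⟨ρ, hρ, n, hsum, index_mem_finals.1 hfinal⟩
  · rintro ⟨ρ, hρ, n, hsum, hfinal⟩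
    exact ⟨_, isPath_toCode_iff.2 ⟨ρ, hρ, fun _ => rfl⟩, n, hsum, index_mem_finals.2 hfinal⟩

theorem IsComplete.universal_toCode_iff (h𝓐 : 𝓐.IsComplete) :
    WAUniversal 𝓐.toCode ↔ ∀ w, 𝓐.Accepts w := by
  refine ⟨fun h w => h𝓐.acceptsCode_iff.1 (h _ fun i => index_lt (w i)), fun h w hw => ?_⟩
  choose w' hw' using fun i => exists_index_eq (hw i)
  obtain rfl : (fun i => index (w' i)) = w := funext hw'
  exact h𝓐.acceptsCode_iff.2 (h w')

theorem primrec_toCode {α : Type*} [Primcodable α] (edge : Q → A → Q → Prop) (start : Q)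
    (final : Set Q) {weight : α → Q → A → Q → ℤ}
    (hweight : ∀ q a p, Primrec fun x => weight x q a p) :
    Primrec fun x => toCode ⟨edge, weight x, start, final⟩ :=
  have htransition (e : Q × A × Q) : Primrec fun x => transition (weight x) e :=
    (Primrec.const (index e.1)).pair <| (Primrec.const (index e.2.1)).pair <|
      (Primrec.const (index e.2.2)).pair (hweight e.1 e.2.1 e.2.2)
  (Primrec.const (Nat.card Q)).pair <| (Primrec.const (Nat.card A)).pair <|
    (primrec_list_map_of_forall
      (Set.toFinite {e : Q × A × Q | edge e.1 e.2.1 e.2.2}).toFinset.toList htransition).pair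
      (.const (index start, (Set.toFinite final).toFinset.toList.map index))

end Code

end WeightedAutomaton

/-- A finite-control machine on registers `K → ℕ`. The rule `t` takes control from `source t` to
`target t` and turns each register content of the form `divisor * q + remainder` into
`factor * q + offset`; it does not apply to other contents. -/
structure RegisterSystem (S T K : Type*) where
  source : T → S
  target : T → S
  divisor : T → K → ℕ
  remainder : T → K → ℕ
  factor : T → K → ℕ
  offset : T → K → ℕ
  divisor_pos : ∀ t k, 0 < divisor t k

namespace RegisterSystem

variable {S T K : Type*}

/-- The step relation between configurations, given by a control state and register contents. -/
def Step (M : RegisterSystem S T K) (c d : S × (K → ℕ)) : Prop :=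
  ∃ t q, c = (M.source t, M.divisor t * q + M.remainder t) ∧
    d = (M.target t, M.factor t * q + M.offset t)

/-- Letters of the words that spell runs of a register system: the run applying the rules
`t₀, t₁, …` with quotients `q₀, q₁, …` is spelled `t₀ B₀ t₁ B₁ …`, where the block `Bᵢ` contains
each register letter `k` exactly `qᵢ k` times. -/
inductive Letter (T K : Type*)
  | rule (t : T)
  | reg (k : K)

/-- States of the checker, the automaton that searches a word for an error in the run it spells.
`track t` remembers the last rule; `grow t k` computes the content of register `k` after the
current application of `t`, and `shrink t k` compares it with the next block, that of `t`; `up` and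
`down` accept any weight that is nonpositive or nonnegative, respectively. -/
inductive CheckerState (T K : Type*)
  | start
  | track (t : T)
  | grow (t : T) (k : K)
  | shrink (t : T) (k : K)
  | up
  | down
  | accept

open Letter CheckerState

instance [Finite T] [Finite K] : Finite (Letter T K) := by
  let f : T ⊕ K → Letter T K := Sum.elim rule reg
  refine Finite.of_surjective f ?_
  rintro (t | k)
  exacts [⟨.inl t, rfl⟩, ⟨.inr k, rfl⟩]

instance [Finite T] [Finite K] : Finite (CheckerState T K) := by
  let f : Fin 4 ⊕ T ⊕ T × K ⊕ T × K → CheckerState T K :=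
    Sum.elim ![start, up, down, accept] <|
      Sum.elim track <| Sum.elim (fun e => grow e.1 e.2) fun e => shrink e.1 e.2
  refine Finite.of_surjective f ?_
  rintro (_ | t | ⟨t, k⟩ | ⟨t, k⟩ | _ | _ | _)
  exacts [⟨.inl 0, rfl⟩, ⟨.inr (.inl t), rfl⟩, ⟨.inr (.inr (.inl (t, k))), rfl⟩,
    ⟨.inr (.inr (.inr (t, k))), rfl⟩, ⟨.inl 1, rfl⟩, ⟨.inl 2, rfl⟩, ⟨.inl 3, rfl⟩]

/-- The edges of the checker of runs of `M` from control state `s`. A deficit of a register can only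
be claimed at the end of a block, an excess also inside it, so that endless blocks are caught. -/
inductive CheckerEdge (M : RegisterSystem S T K) (s : S) :
    CheckerState T K → Letter T K → CheckerState T K → Prop
  | start_track {t} : M.source t = s → CheckerEdge M s start (rule t) (track t)
  | start_grow {t k} : CheckerEdge M s start (rule t) (grow t k)
  | start_shrink {t k} : CheckerEdge M s start (rule t) (shrink t k)
  | start_accept_rule {t} : M.source t ≠ s → CheckerEdge M s start (rule t) accept
  | start_accept_reg {k} : CheckerEdge M s start (reg k) accept
  | track_reg {t k} : CheckerEdge M s (track t) (reg k) (track t)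
  | track_rule {t t'} : M.target t = M.source t' →
      CheckerEdge M s (track t) (rule t') (track t')
  | track_grow {t t' k} : CheckerEdge M s (track t) (rule t') (grow t' k)
  | track_accept {t t'} : M.target t ≠ M.source t' →
      CheckerEdge M s (track t) (rule t') accept
  | grow_reg {t k j} : CheckerEdge M s (grow t k) (reg j) (grow t k)
  | grow_shrink {t k t'} : CheckerEdge M s (grow t k) (rule t') (shrink t' k)
  | shrink_reg {t k j} : CheckerEdge M s (shrink t k) (reg j) (shrink t k)
  | shrink_up {t k a} : CheckerEdge M s (shrink t k) a up
  | shrink_down {t k t'} : CheckerEdge M s (shrink t k) (rule t') down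
  | up {a} : CheckerEdge M s up a up
  | down {a} : CheckerEdge M s down a down
  | accept {a} : CheckerEdge M s accept a accept

variable [DecidableEq K]

/-- The Parikh vector of the register letters in a single letter. -/
def Letter.parikh : Letter T K → K → ℕ
  | rule _ => 0
  | reg k => Pi.single k 1

/-- The weights of the checker. The initial contents `x` enter only the weights of the edges from
`start` to `shrink`. -/
def checkerWeight (M : RegisterSystem S T K) (x : K → ℕ) :
    CheckerState T K → Letter T K → CheckerState T K → ℤ
  | start, _, shrink _ k => x k
  | start, _, grow t k | track _, _, grow t k => M.offset t k
  | grow t k, a, grow _ _ => M.factor t k * a.parikh k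
  | shrink t k, a, shrink _ _ => -(M.divisor t k * a.parikh k)
  | shrink t k, _, up => 1 - M.remainder t k
  | shrink t k, _, down => -1 - M.remainder t k
  | up, _, _ => 1
  | down, _, _ => -1
  | _, _, _ => 0

/-- The automaton accepting the words that do not spell an infinite run of `M` from `(s, x)`. -/
def checker (M : RegisterSystem S T K) (s : S) (x : K → ℕ) :
    WeightedAutomaton (CheckerState T K) (Letter T K) where
  edge := M.CheckerEdge s
  weight := M.checkerWeight x
  start := start
  final := {up, down, accept}

variable {M : RegisterSystem S T K} {s : S} {x : K → ℕ}

theorem checker_isComplete (M : RegisterSystem S T K) (s : S) (x : K → ℕ) :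
    (M.checker s x).IsComplete := by
  rintro (_ | t | ⟨t, k⟩ | ⟨t, k⟩ | _ | _ | _) (t' | j)
  case start.rule =>
    by_cases h : M.source t' = s
    exacts [⟨_, .start_track h⟩, ⟨_, .start_accept_rule h⟩]
  case track.rule =>
    by_cases h : M.target t = M.source t'
    exacts [⟨_, .track_rule h⟩, ⟨_, .track_accept h⟩]
  all_goals exact ⟨_, by constructor⟩

theorem primrec_toCode_checker [Finite T] [Finite K] (M : RegisterSystem S T K) (s : S)
    {α : Type*} [Primcodable α] {x : α → K → ℕ} (hx : ∀ k, Primrec fun n => x n k) :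
    Primrec fun n => (M.checker s (x n)).toCode := by
  refine WeightedAutomaton.primrec_toCode _ _ _ fun q a p => ?_
  cases q <;> cases p
  case start.shrink t k => exact primrec_intCast.comp (hx k)
  all_goals exact .const _

section Rejected

variable {w : ℕ → Letter T K} {m n p : ℕ} {t t' : T} {k : K} {z : ℤ}

theorem accepts_of_run_up (h : (M.checker s x).Run w (n + 1) up z) (hz : z ≤ 0) :
    (M.checker s x).Accepts w := by
  obtain ⟨i, rfl⟩ := Int.exists_eq_neg_ofNat hz
  have hclimb := h.loop (m := i) fun _ _ => .up
  exact ⟨n + i, up, .inl rfl, by simpa [checker, checkerWeight, add_right_comm] using hclimb⟩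

theorem accepts_of_run_down (h : (M.checker s x).Run w (n + 1) down z) (hz : 0 ≤ z) :
    (M.checker s x).Accepts w := by
  obtain ⟨i, rfl⟩ := Int.eq_ofNat_of_zero_le hz
  have hdescent := h.loop (m := i) fun _ _ => .down
  exact ⟨n + i, down, .inr (.inl rfl),
    by simpa [checker, checkerWeight, add_right_comm] using hdescent⟩

theorem accepts_of_run_accept (h : (M.checker s x).Run w (n + 1) accept 0) :
    (M.checker s x).Accepts w :=
  ⟨n, accept, .inr (.inr rfl), h⟩

/-- The number of letters `reg k` among the `n` letters of `w` from position `m`. -/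
def regCount (w : ℕ → Letter T K) (m n : ℕ) (k : K) : ℕ :=
  ∑ j ∈ Finset.range n, (w (m + j)).parikh k

theorem sum_regCount [Fintype K] (hw : ∀ j < n, ∃ k, w (m + j) = reg k) :
    ∑ k, regCount w m n k = n := by
  have hletter : ∀ j ∈ Finset.range n, ∑ k, (w (m + j)).parikh k = 1 := fun j hj => by
    obtain ⟨k, hk⟩ := hw j (Finset.mem_range.1 hj)
    simp [hk, Letter.parikh]
  simp only [regCount]
  rw [Finset.sum_comm, Finset.sum_congr rfl hletter]
  simp

theorem run_track_regs (h : (M.checker s x).Run w m (track t) 0)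
    (hw : ∀ j < n, ∃ k, w (m + j) = reg k) : (M.checker s x).Run w (m + n) (track t) 0 := by
  have := h.loop (m := n) fun j hj => by
    obtain ⟨k, hk⟩ := hw j hj
    exact hk ▸ .track_reg
  simpa [checker, checkerWeight] using this

theorem run_grow_regs (h : (M.checker s x).Run w m (grow t k) z)
    (hw : ∀ j < n, ∃ k, w (m + j) = reg k) :
    (M.checker s x).Run w (m + n) (grow t k) (z + M.factor t k * regCount w m n k) := by
  have := h.loop (m := n) fun j hj => by
    obtain ⟨k, hk⟩ := hw j hj
    exact hk ▸ .grow_reg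
  simpa [checker, checkerWeight, regCount, Finset.mul_sum] using this

theorem run_shrink_regs (h : (M.checker s x).Run w m (shrink t k) z)
    (hw : ∀ j < n, ∃ k, w (m + j) = reg k) :
    (M.checker s x).Run w (m + n) (shrink t k) (z - M.divisor t k * regCount w m n k) := by
  have := h.loop (m := n) fun j hj => by
    obtain ⟨k, hk⟩ := hw j hj
    exact hk ▸ .shrink_reg
  simpa [checker, checkerWeight, regCount, Finset.mul_sum, sub_eq_add_neg] using this

/-- The checker has read, up to position `p`, a correct run whose last letter is the rule `t`, to be
applied to the contents `y`. -/
structure BlockStart (M : RegisterSystem S T K) (s : S) (x : K → ℕ) (w : ℕ → Letter T K) (p : ℕ)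
    (t : T) (y : K → ℕ) : Prop where
  track : (M.checker s x).Run w (p + 1) (track t) 0
  grow : ∀ k, (M.checker s x).Run w (p + 1) (grow t k) (M.offset t k)
  shrink : ∀ k, (M.checker s x).Run w (p + 1) (shrink t k) (y k)

variable {y : K → ℕ}

theorem exists_blockStart_of_not_accepts (hw : ¬(M.checker s x).Accepts w) :
    ∃ t, M.source t = s ∧ M.BlockStart s x w 0 t x := by
  obtain ⟨a, ha⟩ : ∃ a, w 0 = a := ⟨_, rfl⟩
  have hstep {p z} (hedge : M.CheckerEdge s start a p) (hz : M.checkerWeight x start a p = z) :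
      (M.checker s x).Run w 1 p z := by
    subst ha hz
    simpa [checker] using WeightedAutomaton.Run.zero.succ hedge
  cases a with
  | reg k => exact (hw <| accepts_of_run_accept <| hstep .start_accept_reg rfl).elim
  | rule t =>
    have ht : M.source t = s := by
      by_contra ht
      exact hw <| accepts_of_run_accept <| hstep (.start_accept_rule ht) rfl
    exact ⟨t, ht, hstep (.start_track ht) rfl, fun _ => hstep .start_grow rfl,
      fun _ => hstep .start_shrink rfl⟩

theorem remainder_le_of_run_shrink (hw : ¬(M.checker s x).Accepts w)
    (h : (M.checker s x).Run w n (shrink t k) z) : M.remainder t k ≤ z := by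
  by_contra! hz
  refine hw (accepts_of_run_up (h.succ .shrink_up) ?_)
  change z + (1 - (M.remainder t k : ℤ)) ≤ 0
  omega

theorem le_remainder_of_run_shrink (hw : ¬(M.checker s x).Accepts w)
    (h : (M.checker s x).Run w n (shrink t k) z) (hn : w n = rule t') : z ≤ M.remainder t k := by
  by_contra! hz
  refine hw (accepts_of_run_down (h.succ (hn ▸ .shrink_down)) ?_)
  change 0 ≤ z + (-1 - (M.remainder t k : ℤ))
  omega

theorem BlockStart.regCount_le (h : M.BlockStart s x w p t y)
    (hw : ¬(M.checker s x).Accepts w) (hregs : ∀ j < n, ∃ k, w (p + 1 + j) = reg k) (k : K) :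
    regCount w (p + 1) n k ≤ y k := by
  have hle := remainder_le_of_run_shrink hw (run_shrink_regs (h.shrink k) hregs)
  have hdivisor := M.divisor_pos t k
  zify
  nlinarith

theorem BlockStart.exists_next_rule [Finite K] (h : M.BlockStart s x w p t y)
    (hw : ¬(M.checker s x).Accepts w) :
    ∃ n t', w (p + 1 + n) = rule t' ∧ ∀ j < n, ∃ k, w (p + 1 + j) = reg k := by
  cases nonempty_fintype K
  have hrule : ∃ n, ¬∃ k, w (p + 1 + n) = reg k := by
    by_contra! hregs
    have hcount := sum_regCount (n := ∑ k, y k + 1) fun j _ => hregs j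
    have hle := Finset.sum_le_sum fun k (_ : k ∈ Finset.univ) =>
      h.regCount_le hw (n := ∑ k, y k + 1) (fun j _ => hregs j) k
    omega
  classical
  refine ⟨Nat.find hrule, ?_⟩
  rcases hletter : w (p + 1 + Nat.find hrule) with t' | k
  · exact ⟨t', rfl, fun j hj => not_not.1 (Nat.find_min hrule hj)⟩
  · exact (Nat.find_spec hrule ⟨k, hletter⟩).elim

theorem BlockStart.next [Finite K] (h : M.BlockStart s x w p t y)
    (hw : ¬(M.checker s x).Accepts w) :
    ∃ q t' p', y = M.divisor t * q + M.remainder t ∧ M.target t = M.source t' ∧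
      M.BlockStart s x w p' t' (M.factor t * q + M.offset t) := by
  obtain ⟨n, t', hn, hregs⟩ := h.exists_next_rule hw
  have htrack := run_track_regs h.track hregs
  have hgrow k := run_grow_regs (h.grow k) hregs
  have hshrink k := run_shrink_regs (h.shrink k) hregs
  have hstep {q z q' z'} (hrun : (M.checker s x).Run w (p + 1 + n) q z)
      (hedge : M.CheckerEdge s q (rule t') q')
      (hz : z + M.checkerWeight x q (rule t') q' = z') :
      (M.checker s x).Run w (p + 1 + n + 1) q' z' := by
    subst hz
    simpa only [checker, hn] using hrun.succ (hn.symm ▸ hedge)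
  have htarget : M.target t = M.source t' := by
    by_contra hne
    exact hw (accepts_of_run_accept (hstep htrack (.track_accept hne) rfl))
  refine ⟨regCount w (p + 1) n, t', p + 1 + n, ?_, htarget, ?_, fun k => ?_, fun k => ?_⟩
  · funext k
    have hlower := remainder_le_of_run_shrink hw (hshrink k)
    have hupper := le_remainder_of_run_shrink hw (hshrink k) hn
    zify
    simp only [Pi.add_apply, Pi.mul_apply]
    push_cast
    linarith
  · exact hstep htrack (.track_rule htarget) rfl
  · exact hstep htrack .track_grow (zero_add _)
  · refine hstep (hgrow k) .grow_shrink ?_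
    simp [checkerWeight, add_comm]

theorem BlockStart.false_of_acc [Finite K] (hw : ¬(M.checker s x).Accepts w) {c : S × (K → ℕ)}
    (hc : Acc (Function.swap M.Step) c) :
    ∀ {p t}, M.source t = c.1 → ¬M.BlockStart s x w p t c.2 := by
  induction hc with
  | intro c _ ih =>
    intro p t ht h
    obtain ⟨q, t', p', hq, ht', h'⟩ := h.next hw
    exact ih _ ⟨t, q, Prod.ext ht.symm hq, rfl⟩ ht'.symm h'

theorem accepts_of_acc [Finite K] (h : Acc (Function.swap M.Step) (s, x)) (w : ℕ → Letter T K) :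
    (M.checker s x).Accepts w := by
  by_contra hw
  obtain ⟨t, ht, hstart⟩ := exists_blockStart_of_not_accepts hw
  exact BlockStart.false_of_acc hw h ht hstart

end Rejected

section InfiniteRun

/-- The rules `t i` can be applied in turn from `(s, x)`, with quotients counted by the lists
`block i`. -/
structure IsInfiniteRun (M : RegisterSystem S T K) (s : S) (x : K → ℕ) (t : ℕ → T)
    (block : ℕ → List K) : Prop where
  source_zero : M.source (t 0) = s
  init : ∀ k, x k = M.divisor (t 0) k * (block 0).count k + M.remainder (t 0) k
  target_eq : ∀ i, M.target (t i) = M.source (t (i + 1))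
  step : ∀ i k, M.factor (t i) k * (block i).count k + M.offset (t i) k =
    M.divisor (t (i + 1)) k * (block (i + 1)).count k + M.remainder (t (i + 1)) k

variable {t : ℕ → T} {block : ℕ → List K}

theorem exists_count_eq [Finite K] (q : K → ℕ) : ∃ l : List K, ∀ k, l.count k = q k := by
  cases nonempty_fintype K
  exact ⟨(Finsupp.toMultiset (Finsupp.equivFunOnFinite.symm q)).toList, fun k => by
    simp [← Multiset.coe_count]⟩

theorem exists_isInfiniteRun_of_not_acc [Finite K]
    (h : ¬Acc (Function.swap M.Step) (s, x)) : ∃ t block, M.IsInfiniteRun s x t block := by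
  obtain ⟨c, hc0, hc⟩ := not_acc_iff_exists_descending_chain.1 h
  choose t q hsource htarget using hc
  choose block hblock using fun i => exists_count_eq (q i)
  have hstart : (s, x) = _ := hc0.symm.trans (hsource 0)
  have hlink i := (htarget i).symm.trans (hsource (i + 1))
  simp only [Prod.mk.injEq] at hstart hlink
  refine ⟨t, block, hstart.1.symm, fun k => ?_, fun i => (hlink i).1, fun i k => ?_⟩
  · simpa [hblock] using congrFun hstart.2 k
  · simpa [hblock] using congrFun (hlink i).2 k

/-- The next letter of the word spelling a run: in position `(i, l)` the letters of `l` have to be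
emitted before the rule `t i`. -/
def emit (t : ℕ → T) : ℕ × List K → Letter T K
  | (i, []) => rule (t i)
  | (_, k :: _) => reg k

/-- The position reached from a given one by emitting one letter. -/
def advance (block : ℕ → List K) : ℕ × List K → ℕ × List K
  | (i, []) => (i + 1, block i)
  | (i, _ :: l) => (i, l)

/-- The word `t₀ B₀ t₁ B₁ …` spelling a run. -/
def spelling (t : ℕ → T) (block : ℕ → List K) (n : ℕ) : Letter T K :=
  emit t ((advance block)^[n] (0, []))

/-- The states and weights the checker of a correct run can have in a given position of the word
spelling it. -/
def Consistent (M : RegisterSystem S T K) (t : ℕ → T) (block : ℕ → List K) :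
    ℕ × List K → CheckerState T K → ℤ → Prop
  | (0, l), p, z => l = [] ∧ p = start ∧ z = 0
  | (_ + 1, _), start, _ => False
  | (i + 1, _), track u, z => u = t i ∧ z = 0
  | (i + 1, l), grow u k, z => u = t i ∧
      z + M.factor u k * l.count k = M.factor u k * (block i).count k + M.offset u k
  | (i + 1, l), shrink u k, z => u = t i ∧ z = M.divisor u k * l.count k + M.remainder u k
  | (_ + 1, _), up, z => 0 < z
  | (_ + 1, _), down, z => z < 0
  | (_ + 1, _), accept, _ => False

theorem Consistent.step (h : M.IsInfiniteRun s x t block) {pos : ℕ × List K}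
    {p p' : CheckerState T K} {z : ℤ} (hp : M.Consistent t block pos p z)
    (hedge : M.CheckerEdge s p (emit t pos) p') :
    M.Consistent t block (advance block pos) p' (z + M.checkerWeight x p (emit t pos) p') := by
  obtain ⟨_ | i, _ | ⟨j, l⟩⟩ := pos
  · obtain ⟨-, rfl, rfl⟩ := hp
    cases hedge with
    | start_accept_rule hne => exact hne h.source_zero
    | start_shrink => simp [Consistent, advance, checkerWeight, h.init]
    | _ => simp [Consistent, advance, checkerWeight, add_comm]
  · cases hp.1
  · have htarget := h.target_eq i
    have hstep k : (M.factor (t i) k * (block i).count k + M.offset (t i) k : ℤ) =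
        M.divisor (t (i + 1)) k * (block (i + 1)).count k + M.remainder (t (i + 1)) k :=
      mod_cast h.step i k
    cases hedge <;> simp only [Consistent, advance, checkerWeight, List.count_nil] at hp ⊢ <;>
      grind
  · have hcount k :
        ((j :: l).count k : ℤ) = ((emit t (i + 1, j :: l)).parikh k : ℕ) + l.count k := by
      simp [emit, Letter.parikh, List.count_cons, Pi.single_apply, add_comm, @eq_comm _ k]
    cases hedge <;> simp only [Consistent, advance, checkerWeight, hcount] at hp ⊢ <;> grind

theorem not_accepts_spelling (h : M.IsInfiniteRun s x t block) :
    ¬(M.checker s x).Accepts (spelling t block) := by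
  have hinv {n p z} (hrun : (M.checker s x).Run (spelling t block) n p z) :
      M.Consistent t block ((advance block)^[n] (0, [])) p z := by
    induction hrun with
    | zero => exact ⟨rfl, rfl, rfl⟩
    | succ _ hedge ih =>
      rw [Function.iterate_succ_apply']
      exact ih.step h hedge
  rintro ⟨n, p, hp, hrun⟩
  have := hinv hrun
  rcases hpos : (advance block)^[n + 1] (0, []) with ⟨_ | i, l⟩ <;> rw [hpos] at this <;>
    rcases hp with rfl | rfl | rfl <;> simp [Consistent] at this

end InfiniteRun

theorem forall_accepts_checker_iff [Finite K] :
    (∀ w, (M.checker s x).Accepts w) ↔ Acc (Function.swap M.Step) (s, x) := by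
  refine ⟨fun h => ?_, accepts_of_acc⟩
  by_contra hacc
  obtain ⟨t, block, hrun⟩ := exists_isInfiniteRun_of_not_acc hacc
  exact not_accepts_spelling hrun (h _)

end RegisterSystem

namespace StackMachine

open Function StateTransition
open Turing.TM2 (Stmt stepAux step)
open Turing.TM2.Stmt

section StackCode

variable {K Γ : Type*} [Finite Γ]

/-- The base of the positional system in which stacks are encoded. -/
def base (Γ : Type*) : ℕ := Nat.card Γ + 1

/-- The digit standing for the result of inspecting the top of a stack; `none`, the top of the empty
stack, is the digit `0`. -/
def digit : Option Γ → ℕ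
  | none => 0
  | some a => index a + 1

theorem digit_lt (d : Option Γ) : digit d < base Γ := by
  cases d with
  | none => exact Nat.succ_pos _
  | some a => exact Nat.succ_lt_succ (index_lt a)

theorem digit_injective : Injective (digit : Option Γ → ℕ) := by
  rintro (_ | a) (_ | b) h <;> simp_all [digit, index_injective.eq_iff]

/-- The number whose digits, starting from the least significant one, are the symbols of a stack. -/
def stackCode : List Γ → ℕ
  | [] => 0
  | a :: l => base Γ * stackCode l + digit (some a)

theorem stackCode_eq_iff {l : List Γ} {y : ℕ} {d : Option Γ} :
    stackCode l = base Γ * y + digit d ↔ l.head? = d ∧ y = stackCode l.tail := by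
  have hl : stackCode l = base Γ * stackCode l.tail + digit l.head? := by
    cases l <;> simp [stackCode, digit]
  have hmod (y : ℕ) (d : Option Γ) : (base Γ * y + digit d) % base Γ = digit d := by
    rw [Nat.mul_add_mod, Nat.mod_eq_of_lt (digit_lt d)]
  rw [hl]
  constructor
  · intro h
    have hd : digit l.head? = digit d := by rw [← hmod (stackCode l.tail), h, hmod]
    rw [hd, add_left_inj] at h
    exact ⟨digit_injective hd, (Nat.eq_of_mul_eq_mul_left (Nat.succ_pos _) h).symm⟩
  · rintro ⟨rfl, rfl⟩
    rfl

variable [DecidableEq K]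

/-- The register contents encoding a family of stacks. -/
def registers (S : K → List Γ) (k : K) : ℕ := stackCode (S k)

theorem registers_pop_iff {S : K → List Γ} {k : K} {y : K → ℕ} {d : Option Γ} :
    registers S = update (1 : K → ℕ) k (base Γ) * y + Pi.single k (digit d) ↔
      (S k).head? = d ∧ y = registers (update S k (S k).tail) := by
  have hk : registers S k = base Γ * y k + digit d ↔
      (S k).head? = d ∧ y k = registers (update S k (S k).tail) k := by
    simpa [registers] using stackCode_eq_iff
  refine ⟨fun h => ?_, ?_⟩
  · have hhead := hk.1 (by simpa using congrFun h k)
    refine ⟨hhead.1, funext fun i => ?_⟩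
    by_cases hi : i = k
    · exact hi ▸ hhead.2
    · simpa [hi, registers] using (congrFun h i).symm
  · rintro ⟨hhead, rfl⟩
    funext i
    by_cases hi : i = k
    · subst hi
      simpa using hk.2 ⟨hhead, rfl⟩
    · simp [hi, registers]

theorem registers_push (S : K → List Γ) (k : K) (a : Γ) :
    registers (update S k (a :: S k)) =
      update (1 : K → ℕ) k (base Γ) * registers S + Pi.single k (digit (some a)) :=
  registers_pop_iff.2 (by simp)

end StackCode

section Simulation

variable {K Γ Λ σ : Type*}

/-- The stack symbol inspected by a statement. -/
def top : Stmt (fun _ : K => Γ) Λ σ → (K → List Γ) → Option Γ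
  | peek k _ _, S | pop k _ _, S => (S k).head?
  | _, _ => none

/-- The statement and local variables after executing the first instruction of a statement that
inspects the symbol `d`. -/
def next (M : Λ → Stmt (fun _ : K => Γ) Λ σ) :
    Stmt (fun _ : K => Γ) Λ σ → σ → Option Γ → Stmt (fun _ : K => Γ) Λ σ × σ
  | push _ _ q, v, _ => (q, v)
  | peek _ f q, v, d | pop _ f q, v, d => (q, f v d)
  | load f q, v, _ => (q, f v)
  | branch p q₁ q₂, v, _ => (cond (p v) q₁ q₂, v)
  | goto l, v, _ => (M (l v), v)
  | halt, v, _ => (halt, v)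

variable {M : Λ → Stmt (fun _ : K => Γ) Λ σ} {q : Stmt (fun _ : K => Γ) Λ σ} {v : σ}
  {S : K → List Γ}

theorem mem_stmts_of_mem [Inhabited Λ] {L : Finset Λ} {l : Λ} (hl : l ∈ L) :
    some (M l) ∈ Turing.TM2.stmts M L := by
  have hself : M l ∈ Turing.TM2.stmts₁ (M l) := Turing.TM2.stmts₁_self
  simpa [Turing.TM2.stmts] using ⟨l, hl, hself⟩

theorem next_mem_stmts [Inhabited Λ] {L : Finset Λ} (hL : Turing.TM2.Supports M L)
    (hq : some q ∈ Turing.TM2.stmts M L) (v : σ) (d : Option Γ) :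
    some (next M q v d).1 ∈ Turing.TM2.stmts M L := by
  have hself (q : Stmt (fun _ : K => Γ) Λ σ) : q ∈ Turing.TM2.stmts₁ q := Turing.TM2.stmts₁_self
  cases q with
  | goto l => exact mem_stmts_of_mem (Turing.TM2.stmts_supportsStmt hL hq v)
  | halt => exact hq
  | branch p q₁ q₂ =>
    refine Turing.TM2.stmts_trans ?_ hq
    cases hp : p v <;> simp [next, Turing.TM2.stmts₁, hself, hp]
  | push _ _ q | peek _ _ q | pop _ _ q | load _ q =>
    exact Turing.TM2.stmts_trans (by simp [next, Turing.TM2.stmts₁, hself]) hq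

variable [DecidableEq K]

/-- The stacks after executing the first instruction of a statement. -/
def nextStacks : Stmt (fun _ : K => Γ) Λ σ → σ → (K → List Γ) → K → List Γ
  | push k f _, v, S => update S k (f v :: S k)
  | pop k _ _, _, S => update S k (S k).tail
  | _, _, S => S

/-- Termination of a stack machine about to execute the statement `q`. -/
def Halts (M : Λ → Stmt (fun _ : K => Γ) Λ σ) (q : Stmt (fun _ : K => Γ) Λ σ) (v : σ)
    (S : K → List Γ) : Prop :=
  (eval (step M) (stepAux q v S)).Dom

theorem halts_halt : Halts M halt v S :=
  Part.dom_iff_mem.2 ⟨_, mem_eval.2 ⟨.refl, rfl⟩⟩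

theorem halts_next_iff (hq : q ≠ halt) :
    Halts M (next M q v (top q S)).1 (next M q v (top q S)).2 (nextStacks q v S) ↔
      Halts M q v S := by
  cases q with
  | branch p q₁ q₂ => cases hp : p v <;> simp [Halts, next, nextStacks, hp]
  | goto l =>
    have : Reaches (step M) ⟨some (l v), v, S⟩ (stepAux (M (l v)) v S) := .single rfl
    simp [Halts, next, nextStacks, reaches_eval this]
  | halt => exact absurd rfl hq
  | _ => rfl

variable [Finite Γ]

/-- The divisors, remainders, factors and offsets by which the first instruction of a statement that
inspects the symbol `d` acts on encoded stacks. -/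
def coefficients : Stmt (fun _ : K => Γ) Λ σ → σ → Option Γ →
    (K → ℕ) × (K → ℕ) × (K → ℕ) × (K → ℕ)
  | push k f _, v, _ => (1, 0, update 1 k (base Γ), Pi.single k (digit (some (f v))))
  | peek k _ _, _, d =>
    (update 1 k (base Γ), Pi.single k (digit d), update 1 k (base Γ), Pi.single k (digit d))
  | pop k _ _, _, d => (update 1 k (base Γ), Pi.single k (digit d), 1, 0)
  | _, _, _ => (1, 0, 1, 0)

/-- The register system executing the statements in `F` on encoded stacks. A rule consists of a
statement, a value of the local variables and a guess of the inspected symbol, which the remainder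
of the register contents has to confirm. -/
def registerSystem (M : Λ → Stmt (fun _ : K => Γ) Λ σ) (F : Set (Stmt (fun _ : K => Γ) Λ σ)) :
    RegisterSystem (Stmt (fun _ : K => Γ) Λ σ × σ)
      ({q // q ∈ F ∧ q ≠ halt} × σ × Option Γ) K where
  source t := (t.1, t.2.1)
  target t := next M t.1 t.2.1 t.2.2
  divisor t := (coefficients t.1.1 t.2.1 t.2.2).1
  remainder t := (coefficients t.1.1 t.2.1 t.2.2).2.1
  factor t := (coefficients t.1.1 t.2.1 t.2.2).2.2.1
  offset t := (coefficients t.1.1 t.2.1 t.2.2).2.2.2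
  divisor_pos := by
    rintro ⟨⟨q, -⟩, v, d⟩ k
    have hupdate (j : K) : 0 < update (1 : K → ℕ) j (base Γ) k := by
      by_cases h : k = j <;> simp [update_apply, h, base]
    cases q <;> simp [coefficients, hupdate]

variable {F : Set (Stmt (fun _ : K => Γ) Λ σ)}

theorem registerSystem_step_iff {e : (Stmt (fun _ : K => Γ) Λ σ × σ) × (K → ℕ)} :
    (registerSystem M F).Step ((q, v), registers S) e ↔
      (q ∈ F ∧ q ≠ halt) ∧ e = (next M q v (top q S), registers (nextStacks q v S)) := by
  constructor
  · rintro ⟨⟨⟨q', hq⟩, v', d⟩, y, hsource, rfl⟩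
    simp only [registerSystem, Prod.mk.injEq] at hsource
    obtain ⟨⟨rfl, rfl⟩, hS⟩ := hsource
    refine ⟨hq, ?_⟩
    cases q with
    | push k f q =>
      simp only [coefficients, one_mul, add_zero] at hS
      simp [registerSystem, next, nextStacks, coefficients, registers_push, hS]
    | peek k f q =>
      obtain ⟨rfl, -⟩ := registers_pop_iff.1 hS
      exact Prod.ext rfl hS.symm
    | pop k f q =>
      obtain ⟨rfl, hy⟩ := registers_pop_iff.1 hS
      simp [registerSystem, next, nextStacks, coefficients, top, hy]
    | halt => exact absurd rfl hq.2
    | _ =>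
      simp only [coefficients, one_mul, add_zero] at hS
      simp [registerSystem, next, nextStacks, coefficients, hS]
  · rintro ⟨hq, rfl⟩
    have hpop (k : K) := (registers_pop_iff (S := S) (k := k)).2 ⟨rfl, rfl⟩
    refine ⟨⟨⟨q, hq⟩, v, top q S⟩, ?_⟩
    cases q with
    | push k f q =>
      exact ⟨registers S, by simp [registerSystem, coefficients], Prod.ext rfl (registers_push ..)⟩
    | peek k f q => exact ⟨_, Prod.ext rfl (hpop k), Prod.ext rfl (hpop k)⟩
    | pop k f q =>
      exact ⟨_, Prod.ext rfl (hpop k), by simp [registerSystem, coefficients, nextStacks]⟩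
    | _ => exact ⟨registers S, by simp [registerSystem, coefficients, nextStacks]⟩

theorem acc_of_acc_next
    (h : q ≠ halt → Acc (swap (registerSystem M F).Step)
      (next M q v (top q S), registers (nextStacks q v S))) :
    Acc (swap (registerSystem M F).Step) ((q, v), registers S) := by
  refine ⟨_, fun e he => ?_⟩
  obtain ⟨⟨-, hq⟩, rfl⟩ := registerSystem_step_iff.1 he
  exact h hq

theorem acc_of_mem_eval {b c : Turing.TM2.Cfg (fun _ : K => Γ) Λ σ} (hb : b ∈ eval (step M) c) :
    ∀ q v S, stepAux q v S = c → Acc (swap (registerSystem M F).Step) ((q, v), registers S) := by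
  refine evalInduction
    (C := fun c => ∀ q v S, stepAux q v S = c →
      Acc (swap (registerSystem M F).Step) ((q, v), registers S)) hb fun c _ ih q => ?_
  induction q with intro v S hc
  | goto l =>
    have hgoto : stepAux (M (l v)) v S ∈ step M c := hc ▸ rfl
    exact acc_of_acc_next fun _ => ih _ hgoto _ _ _ rfl
  | halt => exact acc_of_acc_next fun hq => absurd rfl hq
  | branch p q₁ q₂ ih₁ ih₂ =>
    refine acc_of_acc_next fun _ => ?_
    cases hp : p v
    · simpa [next, nextStacks, hp] using ih₂ v S (by simpa [hp] using hc)
    · simpa [next, nextStacks, hp] using ih₁ v S (by simpa [hp] using hc)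
  | push _ _ _ ihq | peek _ _ _ ihq | pop _ _ _ ihq | load _ _ ihq =>
    exact acc_of_acc_next fun _ => ihq _ _ hc

theorem halts_of_acc (hF : ∀ q ∈ F, ∀ v d, (next M q v d).1 ∈ F)
    {c : (Stmt (fun _ : K => Γ) Λ σ × σ) × (K → ℕ)}
    (hc : Acc (swap (registerSystem M F).Step) c) :
    ∀ q v S, q ∈ F → c = ((q, v), registers S) → Halts M q v S := by
  induction hc with
  | intro c _ ih =>
    rintro q v S hq rfl
    by_cases hhalt : q = halt
    · exact hhalt ▸ halts_halt
    · exact (halts_next_iff hhalt).1 <|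
        ih _ (registerSystem_step_iff.2 ⟨⟨hq, hhalt⟩, rfl⟩) _ _ _ (hF q hq _ _) rfl

theorem acc_iff_halts (hF : ∀ q ∈ F, ∀ v d, (next M q v d).1 ∈ F) (hq : q ∈ F) :
    Acc (swap (registerSystem M F).Step) ((q, v), registers S) ↔ Halts M q v S := by
  refine ⟨fun h => halts_of_acc hF h q v S hq rfl, fun h => ?_⟩
  obtain ⟨b, hb⟩ := Part.dom_iff_mem.1 h
  exact acc_of_mem_eval hb q v S rfl

end Simulation

section PartialRecursive

open Turing.PartrecToTM2 hiding halt
open Turing.ToPartrec (Code)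

instance : Fintype K' := ⟨{.main, .rev, .aux, .stack}, by rintro ⟨⟩ <;> simp⟩

/-- The finitely many statements reachable in the stack machine that evaluates `c`. -/
def statements (c : Code) : Set (Stmt (fun _ : K' => Γ') Λ' (Option Γ')) :=
  {q | some q ∈ Turing.TM2.stmts tr (codeSupp c .halt)}

instance (c : Code) : Finite (statements c) :=
  (Set.Finite.preimage (Option.some_injective _).injOn (Finset.finite_toSet _)).to_subtype

instance (c : Code) : Finite {q // q ∈ statements c ∧ q ≠ halt} :=
  ((statements c).toFinite.subset fun _ h => h.1).to_subtype

/-- The checker of the register system that evaluates `c` at `n`. -/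
def evalChecker (c : Code) (n : ℕ) :
    WeightedAutomaton
      (RegisterSystem.CheckerState ({q // q ∈ statements c ∧ q ≠ halt} × Option Γ' × Option Γ') K')
      (RegisterSystem.Letter ({q // q ∈ statements c ∧ q ≠ halt} × Option Γ' × Option Γ') K') :=
  (registerSystem tr (statements c)).checker (tr (trNormal c .halt), none)
    (registers (K'.elim (trList [n]) [] [] []))

theorem halts_iff_eval_dom (c : Code) (n : ℕ) :
    Halts tr (tr (trNormal c .halt)) none (K'.elim (trList [n]) [] [] []) ↔ (c.eval [n]).Dom := by
  have hstep : Reaches (step tr) (init c [n])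
      (stepAux (tr (trNormal c .halt)) none (K'.elim (trList [n]) [] [] [])) := .single rfl
  change (StateTransition.eval (step tr) _).Dom ↔ _
  rw [← reaches_eval hstep, Turing.PartrecToTM2.tr_eval]
  rfl

theorem forall_accepts_evalChecker_iff (c : Code) (n : ℕ) :
    (∀ w, (evalChecker c n).Accepts w) ↔ (c.eval [n]).Dom := by
  let _ : Inhabited Λ' := ⟨trNormal c .halt⟩
  have hsupports : Turing.TM2.Supports tr (codeSupp c .halt) := tr_supports c .halt
  rw [evalChecker, RegisterSystem.forall_accepts_checker_iff, ← halts_iff_eval_dom]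
  exact acc_iff_halts (fun q hq => next_mem_stmts hsupports hq) (mem_stmts_of_mem hsupports.1)

theorem trNat_eq_cons {n : ℕ} (hn : n ≠ 0) :
    trNat n = (if n % 2 = 1 then Γ'.bit1 else Γ'.bit0) :: trNat (n / 2) := by
  obtain ⟨m, rfl | rfl⟩ := n.even_or_odd'
  · have hm : (m : Num) ≠ 0 := by
      rw [Ne, ← Num.to_nat_inj]
      simpa using hn
    have hbit : ((2 * m : ℕ) : Num) = (m : Num).bit0 := by
      rw [← Num.to_nat_inj]
      simp [two_mul]
    rw [Nat.mul_div_cancel_left m two_pos, Nat.mul_mod_right, trNat, trNat, hbit]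
    cases h : (m : Num) with
    | zero => exact absurd h hm
    | pos _ => rfl
  · have hbit : ((2 * m + 1 : ℕ) : Num) = (m : Num).bit1 := by
      rw [← Num.to_nat_inj]
      simp [two_mul]
    rw [show (2 * m + 1) / 2 = m by lia, show (2 * m + 1) % 2 = 1 by lia, trNat, trNat, hbit]
    cases (m : Num) <;> rfl

theorem primrec_stackCode_trList : Primrec fun n => stackCode (trList [n]) := by
  let bit (n : ℕ) : ℕ := if n % 2 = 1 then digit (some Γ'.bit1) else digit (some Γ'.bit0)
  have hbit : Primrec bit :=
    .ite (Primrec.eq.comp (Primrec.nat_mod.comp .id (.const 2)) (.const 1)) (.const _) (.const _)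
  have hcons : Primrec₂ fun n y => base Γ' * y + bit n :=
    Primrec.nat_add.comp (Primrec.nat_mul.comp (.const (base Γ')) .snd) (hbit.comp .fst)
  refine primrec_of_halving hcons fun n hn => ?_
  simp only [trList, trNat_eq_cons hn, List.cons_append, stackCode, bit, apply_ite some,
    apply_ite digit]

theorem primrec_toCode_evalChecker (c : Code) : Primrec fun n => (evalChecker c n).toCode := by
  refine RegisterSystem.primrec_toCode_checker _ _ fun k => ?_
  cases k with
  | main => exact primrec_stackCode_trList
  | _ => exact .const 0

theorem exists_code_eval_dom_not_computable :
    ∃ c : Code, ¬ComputablePred fun n : ℕ => (c.eval [n]).Dom := by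
  let f (n : ℕ) : Part ℕ := (Denumerable.ofNat Nat.Partrec.Code n).eval 0
  have hf : Partrec f := Nat.Partrec.Code.eval_part.comp (Computable.ofNat _) (Computable.const 0)
  obtain ⟨c, hc⟩ := Turing.ToPartrec.Code.exists_code (Nat.Partrec'.part_iff₁.2 hf)
  refine ⟨c, fun h => ComputablePred.halting_problem 0 <|
    ComputablePred.computable_of_manyOneReducible
      ⟨Encodable.encode, Computable.encode, fun a => ?_⟩ h⟩
  have hceval := hc ⟨[Encodable.encode a], rfl⟩
  simp only at hceval
  rw [hceval]
  change _ ↔ (f (Encodable.encode a)).Dom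
  simp [f]

end PartialRecursive
end StackMachine

end

/-- The universality problem for integer weighted automata on infinite words is
undecidable. -/
theorem universality_weighted_automata_undecidable :
    ¬ ComputablePred (fun c : WACode => WAWellFormed c ∧ WAUniversal c) := by
  intro h
  obtain ⟨c, hc⟩ := StackMachine.exists_code_eval_dom_not_computable
  refine hc (ComputablePred.computable_of_manyOneReducible
    ⟨_, (StackMachine.primrec_toCode_evalChecker c).to_comp, fun n => ?_⟩ h)
  have hcomplete : (StackMachine.evalChecker c n).IsComplete :=
    RegisterSystem.checker_isComplete _ _ _
  calc (c.eval [n]).Dom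
    _ ↔ ∀ w, (StackMachine.evalChecker c n).Accepts w :=
      (StackMachine.forall_accepts_evalChecker_iff c n).symm
    _ ↔ WAUniversal (StackMachine.evalChecker c n).toCode := hcomplete.universal_toCode_iff.symm
    _ ↔ _ := (and_iff_right hcomplete.wellFormed_toCode).symm
end
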